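/- There exist universal constants c, C > 0 with the following property. For every δ ∈ [0, c], every positive integer n, all measurable sets A, B ⊂ ℝⁿ with 0 < λ(A) < ∞ and 0 < λ(B) < ∞, and every measurable Θ ⊂ A × B with λ(Θ) ≥ (1 − δ)·λ(A)·λ(B), one has λ(A +_Θ B)^{2/n} ≥ (1 − Cδ/n)·(λ(A)^{2/n} + λ(B)^{2/n}). -/

import Mathlib

open MeasureTheory

/-- The restricted (to `Θ`) Minkowski sum `A +_Θ B = { x + y : (x, y) ∈ Θ }`. -/
def restrictedSum {n : ℕ} (Θ : Set (EuclideanSpace ℝ (Fin n) × EuclideanSpace ℝ (Fin n))) :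
    Set (EuclideanSpace ℝ (Fin n)) :=
  (fun p => p.1 + p.2) '' Θ

/-!
Let `T_f` be the Knothe map carrying a density `f` on `ℝⁿ` to the standard Gaussian measure. For
`p + q = 1` and every `z`, the twisted convolution
`∫ f(x)ᵖ g(z - x)^q exp (√p √q ⟨T_f x, T_g (z - x)⟩) dx` is at most
`(√pᵖ √q^q)ⁿ (∫ f)ᵖ (∫ g)^q`. In dimension one, `w x = √p T_f x - √q T_g (z - x)` is increasing, so
`∫ φ(w) w' ≤ 1` for the Gaussian density `φ`, and AM–GM bounds the integrand by a multiple of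
`φ(w) w'`; the triangular structure of the Knothe map then gives all dimensions by induction.

Apply this to the indicators of `A` and `B`, and let `k` be the exponential kernel on `A × B`. Since
`min (exp t) 2 + min (exp (-t)) 2 ≥ 2`, the symmetry of the Gaussian measure gives
`∫ min k 2 ≥ |A| |B|` over `A × B`, hence `∫ k ≥ (1 - 2δ) |A| |B|` over `Θ`. Integrating the twisted
convolution over `z ∈ A +_Θ B` bounds the same integral by
`|A +_Θ B| (√pᵖ √q^q)ⁿ |A|ᵖ |B|^q`, and the result follows by optimising over `p`
and `q`.
-/

open ProbabilityTheory Set Filter Topology Matrix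
open scoped ENNReal NNReal

section CDF

variable (μ : Measure ℝ) [IsProbabilityMeasure μ] [NullSingletonClass μ]

lemma continuous_cdf : Continuous (cdf μ) := by
  refine continuous_iff_continuousAt.2 fun x => ?_
  rw [(monotone_cdf μ).continuousAt_iff_leftLim_eq_rightLim, StieltjesFunction.rightLim_eq]
  have h : ENNReal.ofReal (cdf μ x - Function.leftLim (cdf μ) x) = 0 := by
    rw [← StieltjesFunction.measure_singleton, measure_cdf, measure_singleton]
  exact ((monotone_cdf μ).leftLim_le le_rfl).antisymm (by simpa using h)

lemma Ioo_subset_range_cdf : Ioo 0 1 ⊆ range (cdf μ) := fun _ hp =>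
  mem_range_of_exists_le_of_exists_ge (continuous_cdf μ)
    ((((tendsto_cdf_atBot μ).eventually_lt_const hp.1).exists).imp fun _ => le_of_lt)
    ((((tendsto_cdf_atTop μ).eventually_const_lt hp.2).exists).imp fun _ => le_of_lt)

lemma measure_cdf_le_eq_ofReal {t : ℝ} (ht : t < 1) :
    μ {x | cdf μ x ≤ t} = ENNReal.ofReal t := by
  refine le_antisymm (le_of_forall_gt_imp_ge_of_dense fun a ha => ?_) ?_
  · obtain ⟨r, -, hr, hra⟩ := ENNReal.lt_iff_exists_real_btwn.1
      (lt_min ha (ENNReal.ofReal_lt_one.2 ht))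
    obtain ⟨htr, hr0⟩ := ENNReal.ofReal_lt_ofReal_iff'.1 hr
    obtain ⟨x, rfl⟩ := Ioo_subset_range_cdf μ
      ⟨hr0, ENNReal.ofReal_lt_one.1 (hra.trans_le (min_le_right _ _))⟩
    calc μ {y | cdf μ y ≤ t} ≤ μ (Iic x) :=
          measure_mono fun y hy => ((monotone_cdf μ).reflect_lt (hy.trans_lt htr)).le
      _ = ENNReal.ofReal (cdf μ x) := (ofReal_cdf μ x).symm
      _ ≤ a := hra.le.trans (min_le_left _ _)
  · rcases le_or_gt t 0 with ht0 | ht0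
    · simp [ENNReal.ofReal_of_nonpos ht0]
    · obtain ⟨x, rfl⟩ := Ioo_subset_range_cdf μ ⟨ht0, ht⟩
      rw [ofReal_cdf]
      exact measure_mono fun y hy => monotone_cdf μ hy

lemma map_cdf_eq_restrict_Ioo : μ.map (cdf μ) = volume.restrict (Ioo 0 1) := by
  have := Measure.isProbabilityMeasure_map (μ := μ) (continuous_cdf μ).aemeasurable
  refine Measure.ext_of_Iic _ _ fun t => ?_
  rw [Measure.map_apply (continuous_cdf μ).measurable measurableSet_Iic,
    Measure.restrict_apply measurableSet_Iic]
  rcases lt_or_ge t 1 with ht | ht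
  · have hIoc : Iic t ∩ Ioo 0 1 = Ioc 0 t := by grind
    rw [hIoc, Real.volume_Ioc, sub_zero]
    exact measure_cdf_le_eq_ofReal μ ht
  · have hIoo : Iic t ∩ Ioo 0 1 = Ioo 0 1 := by grind
    have huniv : cdf μ ⁻¹' Iic t = univ := eq_univ_of_forall fun x => (cdf_le_one μ x).trans ht
    simp [hIoo, huniv]

lemma ae_cdf_mem_Ioo : ∀ᵐ x ∂μ, cdf μ x ∈ Ioo 0 1 := by
  have h : ∀ᵐ p ∂μ.map (cdf μ), p ∈ Ioo (0 : ℝ) 1 := by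
    rw [map_cdf_eq_restrict_Ioo]
    exact ae_restrict_mem measurableSet_Ioo
  exact ae_of_ae_map (continuous_cdf μ).aemeasurable h

end CDF

lemma ae_hasDerivAt_cdf (μ : Measure ℝ) [IsProbabilityMeasure μ] :
    ∀ᵐ x, HasDerivAt (cdf μ) (μ.rnDeriv volume x).toReal x := by
  simpa only [measure_cdf] using (cdf μ).ae_hasDerivAt

section Gaussian

lemma continuous_gaussianPDFReal (m : ℝ) (v : ℝ≥0) : Continuous (gaussianPDFReal m v) := by
  rw [gaussianPDFReal_def]
  fun_prop

lemma cdf_gaussianReal_eq_integral (m : ℝ) {v : ℝ≥0} (hv : v ≠ 0) (x : ℝ) :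
    cdf (gaussianReal m v) x = ∫ t in Iic x, gaussianPDFReal m v t := by
  rw [cdf_eq_real, measureReal_def, gaussianReal_apply_eq_integral m hv,
    ENNReal.toReal_ofReal (integral_nonneg fun _ => gaussianPDFReal_nonneg m v _)]

lemma hasDerivAt_cdf_gaussianReal (m : ℝ) {v : ℝ≥0} (hv : v ≠ 0) (x : ℝ) :
    HasDerivAt (cdf (gaussianReal m v)) (gaussianPDFReal m v x) x := by
  have hint := integrable_gaussianPDFReal m v
  have hcont := continuous_gaussianPDFReal m v
  have hcdf : ⇑(cdf (gaussianReal m v)) =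
      fun y => (∫ t in (0)..y, gaussianPDFReal m v t) + cdf (gaussianReal m v) 0 := by
    funext y
    rw [cdf_gaussianReal_eq_integral m hv, cdf_gaussianReal_eq_integral m hv,
      ← intervalIntegral.integral_Iic_sub_Iic hint.integrableOn hint.integrableOn, sub_add_cancel]
  rw [hcdf]
  exact (intervalIntegral.integral_hasDerivAt_right hint.intervalIntegrable
    (hcont.stronglyMeasurableAtFilter _ _) hcont.continuousAt).add_const _

lemma strictMono_cdf_gaussianReal (m : ℝ) {v : ℝ≥0} (hv : v ≠ 0) :
    StrictMono (cdf (gaussianReal m v)) :=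
  strictMono_of_hasDerivAt_pos (hasDerivAt_cdf_gaussianReal m hv)
    fun x => gaussianPDFReal_pos m v x hv

instance isNegInvariant_gaussianReal (v : ℝ≥0) : (gaussianReal 0 v).IsNegInvariant :=
  ⟨gaussianReal_map_neg.trans (by rw [neg_zero])⟩

instance nullSingletonClass_stdGaussian : NullSingletonClass (gaussianReal 0 1) :=
  nullSingletonClass_gaussianReal one_ne_zero

/-- The quantile function of the standard Gaussian measure, extended by `0` outside `(0, 1)`. -/
noncomputable def gaussianQuantile : ℝ → ℝ :=
  Function.extend (cdf (gaussianReal 0 1)) id 0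

lemma gaussianQuantile_cdf (x : ℝ) : gaussianQuantile (cdf (gaussianReal 0 1) x) = x :=
  (strictMono_cdf_gaussianReal 0 one_ne_zero).injective.extend_apply _ _ x

lemma cdf_gaussianQuantile {p : ℝ} (hp : p ∈ Ioo (0 : ℝ) 1) :
    cdf (gaussianReal 0 1) (gaussianQuantile p) = p := by
  obtain ⟨x, rfl⟩ := Ioo_subset_range_cdf (gaussianReal 0 1) hp
  rw [gaussianQuantile_cdf]

lemma measurable_gaussianQuantile : Measurable gaussianQuantile :=
  ((continuous_cdf _).measurableEmbedding
    (strictMono_cdf_gaussianReal 0 one_ne_zero).injective).measurable_extend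
    measurable_id measurable_const

lemma strictMonoOn_gaussianQuantile : StrictMonoOn gaussianQuantile (Ioo 0 1) := by
  intro p hp r hr hpr
  rwa [← (strictMono_cdf_gaussianReal 0 one_ne_zero).lt_iff_lt, cdf_gaussianQuantile hp,
    cdf_gaussianQuantile hr]

lemma cdf_gaussianReal_mem_Ioo (m : ℝ) {v : ℝ≥0} (hv : v ≠ 0) (x : ℝ) :
    cdf (gaussianReal m v) x ∈ Ioo 0 1 :=
  ⟨(cdf_nonneg _ (x - 1)).trans_lt (strictMono_cdf_gaussianReal m hv (by linarith)),
    (strictMono_cdf_gaussianReal m hv (by linarith)).trans_le (cdf_le_one _ (x + 1))⟩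

lemma image_gaussianQuantile_Ioo : gaussianQuantile '' Ioo 0 1 = univ :=
  eq_univ_of_forall fun x =>
    ⟨_, cdf_gaussianReal_mem_Ioo 0 one_ne_zero x, gaussianQuantile_cdf x⟩

lemma hasDerivAt_gaussianQuantile {p : ℝ} (hp : p ∈ Ioo (0 : ℝ) 1) :
    HasDerivAt gaussianQuantile (gaussianPDFReal 0 1 (gaussianQuantile p))⁻¹ p := by
  have hp' : Ioo (0 : ℝ) 1 ∈ 𝓝 p := isOpen_Ioo.mem_nhds hp
  have hcont : ContinuousAt gaussianQuantile p :=
    strictMonoOn_gaussianQuantile.continuousAt_of_image_mem_nhds hp'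
      (image_gaussianQuantile_Ioo ▸ univ_mem)
  exact HasDerivAt.of_local_left_inverse hcont (hasDerivAt_cdf_gaussianReal 0 one_ne_zero _)
    (gaussianPDFReal_pos 0 1 _ one_ne_zero).ne' (mem_of_superset hp' fun _ => cdf_gaussianQuantile)

end Gaussian

section Transport

instance nullSingletonClass_smul {α : Type*} [MeasurableSpace α] (c : ℝ≥0∞) (μ : Measure α)
    [NullSingletonClass μ] : NullSingletonClass (c • μ) :=
  ⟨fun x => by rw [Measure.smul_apply, measure_singleton, smul_zero]⟩

/-- The distribution function of the finite measure `μ`, normalised to take values in `[0, 1]`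
(it vanishes identically when `μ = 0`). -/
noncomputable def normalizedCDF (μ : Measure ℝ) (x : ℝ) : ℝ := μ.real (Iic x) / μ.real univ

/-- The increasing map transporting the normalisation of the finite measure `μ` on `ℝ` to the
standard Gaussian measure. -/
noncomputable def gaussianTransport (μ : Measure ℝ) (x : ℝ) : ℝ :=
  gaussianQuantile (normalizedCDF μ x)

variable (μ : Measure ℝ) [IsFiniteMeasure μ]

lemma monotone_normalizedCDF : Monotone (normalizedCDF μ) := fun _ _ hxy =>
  div_le_div_of_nonneg_right (measureReal_mono (Iic_subset_Iic.2 hxy)) measureReal_nonneg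

lemma measurable_gaussianTransport : Measurable (gaussianTransport μ) :=
  measurable_gaussianQuantile.comp (monotone_normalizedCDF μ).measurable

lemma monotoneOn_gaussianTransport :
    MonotoneOn (gaussianTransport μ) {x | normalizedCDF μ x ∈ Ioo 0 1} := fun _ hx _ hy hxy =>
  strictMonoOn_gaussianQuantile.monotoneOn hx hy (monotone_normalizedCDF μ hxy)

lemma monotoneOn_mul_gaussianTransport_sub (ν : Measure ℝ) [IsFiniteMeasure ν] {a b : ℝ}
    (ha : 0 ≤ a) (hb : 0 ≤ b) (z : ℝ) :
    MonotoneOn (fun x => a * gaussianTransport μ x - b * gaussianTransport ν (z - x))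
      {x | normalizedCDF μ x ∈ Ioo 0 1 ∧ normalizedCDF ν (z - x) ∈ Ioo 0 1} :=
  fun _ hx _ hy hxy => sub_le_sub
    (mul_le_mul_of_nonneg_left (monotoneOn_gaussianTransport μ hx.1 hy.1 hxy) ha)
    (mul_le_mul_of_nonneg_left
      (monotoneOn_gaussianTransport ν hy.2 hx.2 (sub_le_sub_left hxy z)) hb)

lemma normalizedCDF_eq_cdf [NeZero μ] : normalizedCDF μ = cdf ((μ univ)⁻¹ • μ) := by
  funext x
  rw [cdf_eq_real, measureReal_ennreal_smul_apply, ENNReal.toReal_inv, normalizedCDF,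
    div_eq_inv_mul, measureReal_def μ univ]

lemma map_gaussianTransport [NullSingletonClass μ] :
    μ.map (gaussianTransport μ) = μ univ • gaussianReal 0 1 := by
  rcases eq_zero_or_neZero μ with rfl | _
  · simp
  have hμ : μ = μ univ • (μ univ)⁻¹ • μ := by
    rw [smul_smul, ENNReal.mul_inv_cancel (NeZero.ne _) (measure_ne_top μ univ), one_smul]
  have hprob : ((μ univ)⁻¹ • μ).map (gaussianTransport μ) = gaussianReal 0 1 := calc
    ((μ univ)⁻¹ • μ).map (gaussianTransport μ)
      = (((μ univ)⁻¹ • μ).map (cdf ((μ univ)⁻¹ • μ))).map gaussianQuantile := by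
        rw [Measure.map_map measurable_gaussianQuantile (continuous_cdf _).measurable,
          ← normalizedCDF_eq_cdf]
        rfl
    _ = ((gaussianReal 0 1).map (cdf (gaussianReal 0 1))).map gaussianQuantile := by
        rw [map_cdf_eq_restrict_Ioo, map_cdf_eq_restrict_Ioo]
    _ = gaussianReal 0 1 := by
        rw [Measure.map_map measurable_gaussianQuantile (continuous_cdf _).measurable,
          (funext gaussianQuantile_cdf : gaussianQuantile ∘ cdf (gaussianReal 0 1) = id),
          Measure.map_id]
  calc μ.map (gaussianTransport μ) = (μ univ • (μ univ)⁻¹ • μ).map (gaussianTransport μ) :=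
        congrArg (Measure.map (gaussianTransport μ)) hμ
    _ = μ univ • gaussianReal 0 1 := by rw [Measure.map_smul, hprob]

lemma ae_normalizedCDF_mem_Ioo [NullSingletonClass μ] :
    ∀ᵐ x ∂μ, normalizedCDF μ x ∈ Ioo 0 1 := by
  rcases eq_zero_or_neZero μ with rfl | _
  · simp
  rw [normalizedCDF_eq_cdf]
  exact (Measure.ae_ennreal_smul_measure_iff (ENNReal.inv_ne_zero.2 (measure_ne_top μ univ))).1
    (ae_cdf_mem_Ioo _)

lemma ae_hasDerivAt_normalizedCDF [NeZero μ] :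
    ∀ᵐ x, HasDerivAt (normalizedCDF μ) (μ.rnDeriv volume x / μ univ).toReal x := by
  rw [normalizedCDF_eq_cdf]
  filter_upwards [ae_hasDerivAt_cdf ((μ univ)⁻¹ • μ), Measure.rnDeriv_smul_left_of_ne_top μ volume
    (ENNReal.inv_ne_top.2 (NeZero.ne (μ univ)))] with x hx hrn
  rwa [hrn, Pi.smul_apply, smul_eq_mul, ← ENNReal.div_eq_inv_mul] at hx

lemma ae_hasDerivAt_gaussianTransport : ∀ᵐ x, normalizedCDF μ x ∈ Ioo 0 1 →
    HasDerivAt (gaussianTransport μ) ((μ.rnDeriv volume x / μ univ).toReal /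
      gaussianPDFReal 0 1 (gaussianTransport μ x)) x := by
  rcases eq_zero_or_neZero μ with rfl | _
  · simp [normalizedCDF]
  filter_upwards [ae_hasDerivAt_normalizedCDF μ] with x hx hmem
  rw [div_eq_inv_mul]
  exact (hasDerivAt_gaussianQuantile hmem).comp x hx

end Transport

lemma lintegral_deriv_mul_comp_le_of_monotoneOn {s : Set ℝ} (hs : MeasurableSet s) {w w' : ℝ → ℝ}
    (hw : ∀ᵐ x ∂volume.restrict s, HasDerivAt w (w' x) x) (hmono : MonotoneOn w s)
    (φ : ℝ → ℝ≥0∞) : ∫⁻ x in s, ENNReal.ofReal (w' x) * φ (w x) ≤ ∫⁻ y, φ y := by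
  obtain ⟨t, ht, htm, htw⟩ := hw.exists_measurable_mem
  rw [← Measure.restrict_eq_self_of_ae_mem ht, Measure.restrict_restrict htm,
    ← lintegral_image_eq_lintegral_deriv_mul_of_monotoneOn (htm.inter hs)
      (fun x hx => (htw x hx.1).hasDerivWithinAt) (hmono.mono inter_subset_right)]
  exact setLIntegral_le_lintegral _ _

lemma ae_lintegral_eq_zero_imp {α : Type*} [MeasurableSpace α] {μ : Measure α} {f : α → ℝ≥0∞}
    (hf : Measurable f) : ∀ᵐ x ∂μ, ∫⁻ y, f y ∂μ = 0 → f x = 0 :=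
  ae_all_iff.2 fun h => (lintegral_eq_zero_iff hf).1 h

section TwistedConvolution

variable {p q : ℝ}

lemma gaussianPDFReal_sqrt_mul_sub_sqrt_mul (hp : 0 ≤ p) (hq : 0 ≤ q) (hpq : p + q = 1)
    (u v : ℝ) :
    gaussianPDFReal 0 1 (√p * u - √q * v) =
      gaussianPDFReal 0 1 u ^ p * gaussianPDFReal 0 1 v ^ q * Real.exp (√p * √q * (u * v)) := by
  have hk : (0 : ℝ) < (√(2 * Real.pi))⁻¹ := by positivity
  have hexponent : -(√p * u - √q * v) ^ 2 / 2 =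
      -u ^ 2 / 2 * p + -v ^ 2 / 2 * q + √p * √q * (u * v) := by
    linear_combination -(u ^ 2 / 2) * Real.sq_sqrt hp - (v ^ 2 / 2) * Real.sq_sqrt hq
  simp only [gaussianPDFReal, NNReal.coe_one, mul_one, sub_zero]
  rw [Real.mul_rpow hk.le (Real.exp_pos _).le, Real.mul_rpow hk.le (Real.exp_pos _).le,
    mul_mul_mul_comm, ← Real.rpow_add hk, hpq, Real.rpow_one, ← Real.exp_mul, ← Real.exp_mul,
    ← Real.exp_add, mul_assoc, ← Real.exp_add, hexponent]

lemma rpow_mul_rpow_le_sqrt_mul_add (hp : 0 < p) (hq : 0 < q) (hpq : p + q = 1) {a b : ℝ}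
    (ha : 0 ≤ a) (hb : 0 ≤ b) :
    a ^ p * b ^ q ≤ √p ^ p * √q ^ q * (√p * a + √q * b) := by
  have hsp := Real.sqrt_pos.2 hp
  have hsq := Real.sqrt_pos.2 hq
  calc a ^ p * b ^ q = √p ^ p * √q ^ q * ((a / √p) ^ p * (b / √q) ^ q) := by
        rw [Real.div_rpow ha hsp.le, Real.div_rpow hb hsq.le]
        field_simp
    _ ≤ √p ^ p * √q ^ q * (p * (a / √p) + q * (b / √q)) := by
        gcongr
        exact Real.geom_mean_le_arith_mean2_weighted hp.le hq.le (by positivity) (by positivity) hpq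
    _ = √p ^ p * √q ^ q * (√p * a + √q * b) := by
        rw [mul_div_left_comm, Real.div_sqrt, mul_div_left_comm, Real.div_sqrt, mul_comm a,
          mul_comm b]

lemma rpow_mul_rpow_mul_exp_le (hp : 0 < p) (hq : 0 < q) (hpq : p + q = 1) {a b : ℝ≥0∞}
    (ha : a ≠ ∞) (hb : b ≠ ∞) (u v : ℝ) :
    a ^ p * b ^ q * ENNReal.ofReal (Real.exp (√p * √q * (u * v))) ≤
      ENNReal.ofReal (√p ^ p * √q ^ q) *
        (ENNReal.ofReal (√p * (a.toReal / gaussianPDFReal 0 1 u) +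
          √q * (b.toReal / gaussianPDFReal 0 1 v)) * gaussianPDF 0 1 (√p * u - √q * v)) := by
  lift a to ℝ≥0 using ha
  lift b to ℝ≥0 using hb
  have hu := gaussianPDFReal_pos 0 1 u one_ne_zero
  have hv := gaussianPDFReal_pos 0 1 v one_ne_zero
  have key : (a : ℝ) ^ p * (b : ℝ) ^ q * Real.exp (√p * √q * (u * v)) ≤
      √p ^ p * √q ^ q * ((√p * (a / gaussianPDFReal 0 1 u) + √q * (b / gaussianPDFReal 0 1 v)) *
        gaussianPDFReal 0 1 (√p * u - √q * v)) := calc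
    (a : ℝ) ^ p * (b : ℝ) ^ q * Real.exp (√p * √q * (u * v))
      = (a / gaussianPDFReal 0 1 u) ^ p * (b / gaussianPDFReal 0 1 v) ^ q *
          gaussianPDFReal 0 1 (√p * u - √q * v) := by
        rw [gaussianPDFReal_sqrt_mul_sub_sqrt_mul hp.le hq.le hpq,
          Real.div_rpow a.coe_nonneg hu.le, Real.div_rpow b.coe_nonneg hv.le]
        field_simp
    _ ≤ √p ^ p * √q ^ q * (√p * (a / gaussianPDFReal 0 1 u) + √q * (b / gaussianPDFReal 0 1 v)) *
          gaussianPDFReal 0 1 (√p * u - √q * v) :=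
        mul_le_mul_of_nonneg_right (rpow_mul_rpow_le_sqrt_mul_add hp hq hpq (by positivity)
          (by positivity)) (gaussianPDFReal_nonneg 0 1 _)
    _ = _ := mul_assoc _ _ _
  calc (a : ℝ≥0∞) ^ p * (b : ℝ≥0∞) ^ q * ENNReal.ofReal (Real.exp (√p * √q * (u * v)))
      = ENNReal.ofReal (a ^ p * b ^ q * Real.exp (√p * √q * (u * v))) := by
        rw [ENNReal.ofReal_mul (by positivity), ENNReal.ofReal_mul (by positivity),
          ← ENNReal.ofReal_rpow_of_nonneg a.coe_nonneg hp.le, ENNReal.ofReal_coe_nnreal,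
          ← ENNReal.ofReal_rpow_of_nonneg b.coe_nonneg hq.le, ENNReal.ofReal_coe_nnreal]
    _ ≤ _ := ENNReal.ofReal_le_ofReal key
    _ = _ := by
        rw [gaussianPDF, ← ENNReal.ofReal_mul (by positivity), ← ENNReal.ofReal_mul (by positivity),
          ENNReal.coe_toReal, ENNReal.coe_toReal]

lemma ae_normalizedCDF_withDensity_mem_Ioo {f : ℝ → ℝ≥0∞} (hf : Measurable f)
    (hfi : ∫⁻ t, f t ≠ ∞) :
    ∀ᵐ x, f x ≠ 0 → normalizedCDF (volume.withDensity f) x ∈ Ioo 0 1 := by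
  have := isFiniteMeasure_withDensity hfi
  exact (ae_withDensity_iff hf).1 (ae_normalizedCDF_mem_Ioo _)

lemma ae_hasDerivAt_gaussianTransport_withDensity {f : ℝ → ℝ≥0∞} (hf : Measurable f)
    (hfi : ∫⁻ t, f t ≠ ∞) : ∀ᵐ x, normalizedCDF (volume.withDensity f) x ∈ Ioo 0 1 →
    HasDerivAt (gaussianTransport (volume.withDensity f)) ((f x / ∫⁻ t, f t).toReal /
      gaussianPDFReal 0 1 (gaussianTransport (volume.withDensity f) x)) x := by
  have := isFiniteMeasure_withDensity hfi
  filter_upwards [ae_hasDerivAt_gaussianTransport (volume.withDensity f),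
    Measure.rnDeriv_withDensity volume hf] with x hx hrn
  rwa [hrn, withDensity_apply f .univ, Measure.restrict_univ] at hx

lemma ae_hasDerivAt_mul_gaussianTransport_withDensity_sub {f g : ℝ → ℝ≥0∞} (hf : Measurable f)
    (hg : Measurable g) (hfi : ∫⁻ t, f t ≠ ∞) (hgi : ∫⁻ t, g t ≠ ∞) (a b z : ℝ) :
    ∀ᵐ x, normalizedCDF (volume.withDensity f) x ∈ Ioo 0 1 ∧
        normalizedCDF (volume.withDensity g) (z - x) ∈ Ioo 0 1 →
      HasDerivAt (fun x => a * gaussianTransport (volume.withDensity f) x -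
          b * gaussianTransport (volume.withDensity g) (z - x))
        (a * ((f x / ∫⁻ t, f t).toReal /
            gaussianPDFReal 0 1 (gaussianTransport (volume.withDensity f) x)) +
          b * ((g (z - x) / ∫⁻ t, g t).toReal /
            gaussianPDFReal 0 1 (gaussianTransport (volume.withDensity g) (z - x)))) x := by
  have hrefl := (Measure.measurePreserving_sub_left volume z).quasiMeasurePreserving
  filter_upwards [ae_hasDerivAt_gaussianTransport_withDensity hf hfi,
    hrefl.ae (ae_hasDerivAt_gaussianTransport_withDensity hg hgi)] with x hu hv hx
  have hv' := (hv hx.2).comp x ((hasDerivAt_id x).const_sub z)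
  exact (((hu hx.1).const_mul a).sub (hv'.const_mul b)).congr_deriv (by ring)

lemma lintegral_div_rpow_mul_exp_gaussianTransport_le (hp : 0 < p) (hq : 0 < q) (hpq : p + q = 1)
    {f g : ℝ → ℝ≥0∞} (hf : Measurable f) (hg : Measurable g) (hfi : ∫⁻ t, f t ≠ ∞)
    (hgi : ∫⁻ t, g t ≠ ∞) (z : ℝ) :
    ∫⁻ x, (f x / ∫⁻ t, f t) ^ p * (g (z - x) / ∫⁻ t, g t) ^ q *
        ENNReal.ofReal (Real.exp (√p * √q * (gaussianTransport (volume.withDensity f) x *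
          gaussianTransport (volume.withDensity g) (z - x)))) ≤
      ENNReal.ofReal (√p ^ p * √q ^ q) := by
  have := isFiniteMeasure_withDensity hfi
  have := isFiniteMeasure_withDensity hgi
  have hrefl := (Measure.measurePreserving_sub_left volume z).quasiMeasurePreserving
  set F := normalizedCDF (volume.withDensity f)
  set G := normalizedCDF (volume.withDensity g)
  set u := gaussianTransport (volume.withDensity f)
  set v := fun x => gaussianTransport (volume.withDensity g) (z - x)
  set w' := fun x => √p * ((f x / ∫⁻ t, f t).toReal / gaussianPDFReal 0 1 (u x)) +
    √q * ((g (z - x) / ∫⁻ t, g t).toReal / gaussianPDFReal 0 1 (v x))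
  set s := {x | F x ∈ Ioo 0 1 ∧ G (z - x) ∈ Ioo 0 1}
  have hs : MeasurableSet s :=
    ((monotone_normalizedCDF _).measurable measurableSet_Ioo).inter
      ((monotone_normalizedCDF _).measurable.comp (measurable_const_sub z) measurableSet_Ioo)
  have hderiv : ∀ᵐ x ∂volume.restrict s, HasDerivAt (fun x => √p * u x - √q * v x) (w' x) x :=
    (ae_restrict_iff' hs).2
      (ae_hasDerivAt_mul_gaussianTransport_withDensity_sub hf hg hfi hgi _ _ z)
  have hmono : MonotoneOn (fun x => √p * u x - √q * v x) s :=
    monotoneOn_mul_gaussianTransport_sub _ _ (Real.sqrt_nonneg p) (Real.sqrt_nonneg q) z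
  have hpointwise : ∀ᵐ x, (f x / ∫⁻ t, f t) ^ p * (g (z - x) / ∫⁻ t, g t) ^ q *
        ENNReal.ofReal (Real.exp (√p * √q * (u x * v x))) ≤ ENNReal.ofReal (√p ^ p * √q ^ q) *
      s.indicator (fun x => ENNReal.ofReal (w' x) * gaussianPDF 0 1 (√p * u x - √q * v x)) x := by
    filter_upwards [ae_normalizedCDF_withDensity_mem_Ioo hf hfi, ae_lt_top hf hfi,
      hrefl.ae (ae_normalizedCDF_withDensity_mem_Ioo hg hgi), hrefl.ae (ae_lt_top hg hgi),
      ae_lintegral_eq_zero_imp hf, hrefl.ae (ae_lintegral_eq_zero_imp hg)]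
      with x hF hfx hG hgx hf_imp hg_imp
    rcases eq_or_ne (f x) 0 with hf0 | hf0
    · simp [hf0, hp]
    rcases eq_or_ne (g (z - x)) 0 with hg0 | hg0
    · simp [hg0, hq]
    rw [indicator_of_mem (show x ∈ s from ⟨hF hf0, hG hg0⟩)]
    exact rpow_mul_rpow_mul_exp_le hp hq hpq (ENNReal.div_ne_top hfx.ne (mt hf_imp hf0))
      (ENNReal.div_ne_top hgx.ne (mt hg_imp hg0)) (u x) (v x)
  calc _ ≤ _ := lintegral_mono_ae hpointwise
    _ = ENNReal.ofReal (√p ^ p * √q ^ q) *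
        ∫⁻ x in s, ENNReal.ofReal (w' x) * gaussianPDF 0 1 (√p * u x - √q * v x) := by
      rw [lintegral_const_mul' _ _ ENNReal.ofReal_ne_top, lintegral_indicator hs]
    _ ≤ ENNReal.ofReal (√p ^ p * √q ^ q) := mul_le_of_le_one_right'
      ((lintegral_deriv_mul_comp_le_of_monotoneOn hs hderiv hmono _).trans_eq
        (lintegral_gaussianPDF_eq_one 0 one_ne_zero))

lemma lintegral_rpow_mul_exp_gaussianTransport_le (hp : 0 < p) (hq : 0 < q) (hpq : p + q = 1)
    {f g : ℝ → ℝ≥0∞} (hf : Measurable f) (hg : Measurable g) (hfi : ∫⁻ t, f t ≠ ∞)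
    (hgi : ∫⁻ t, g t ≠ ∞) (z : ℝ) :
    ∫⁻ x, f x ^ p * g (z - x) ^ q * ENNReal.ofReal (Real.exp (√p * √q *
        (gaussianTransport (volume.withDensity f) x *
          gaussianTransport (volume.withDensity g) (z - x)))) ≤
      ENNReal.ofReal (√p ^ p * √q ^ q) * ((∫⁻ t, f t) ^ p * (∫⁻ t, g t) ^ q) := by
  have hdiv : ∀ {h : ℝ → ℝ≥0∞}, Measurable h → ∫⁻ t, h t ≠ ∞ →
      ∀ᵐ x, h x = h x / (∫⁻ t, h t) * ∫⁻ t, h t := by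
    intro h hh hhi
    filter_upwards [ae_lintegral_eq_zero_imp hh] with x hx
    exact (ENNReal.div_mul_cancel' hx fun hi => absurd hi hhi).symm
  have hrefl := (Measure.measurePreserving_sub_left volume z).quasiMeasurePreserving
  calc _ = ∫⁻ x, (∫⁻ t, f t) ^ p * (∫⁻ t, g t) ^ q *
        ((f x / ∫⁻ t, f t) ^ p * (g (z - x) / ∫⁻ t, g t) ^ q *
        ENNReal.ofReal (Real.exp (√p * √q * (gaussianTransport (volume.withDensity f) x *
          gaussianTransport (volume.withDensity g) (z - x))))) := by
        refine lintegral_congr_ae ?_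
        filter_upwards [hdiv hf hfi, hrefl.ae (hdiv hg hgi)] with x hx hzx
        conv_lhs => rw [hx, hzx]
        rw [ENNReal.mul_rpow_of_nonneg _ _ hp.le, ENNReal.mul_rpow_of_nonneg _ _ hq.le]
        ring
    _ = (∫⁻ t, f t) ^ p * (∫⁻ t, g t) ^ q * _ := lintegral_const_mul' _ _
        (ENNReal.mul_ne_top (ENNReal.rpow_ne_top_of_nonneg hp.le hfi)
          (ENNReal.rpow_ne_top_of_nonneg hq.le hgi))
    _ ≤ _ := by
        rw [mul_comm]
        gcongr
        exact lintegral_div_rpow_mul_exp_gaussianTransport_le hp hq hpq hf hg hfi hgi z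

end TwistedConvolution

section KnotheMap

@[fun_prop]
lemma measurable_vecCons {α : Type*} [MeasurableSpace α] {n : ℕ} {a : α → ℝ} {v : α → Fin n → ℝ}
    (ha : Measurable a) (hv : Measurable v) : Measurable fun x => vecCons (a x) (v x) :=
  measurable_pi_iff.2 (Fin.cases ha fun i => (measurable_pi_apply i).comp hv)

@[fun_prop]
lemma measurable_vecTail {n : ℕ} : Measurable (vecTail : (Fin (n + 1) → ℝ) → Fin n → ℝ) :=
  measurable_pi_iff.2 fun i => measurable_pi_apply i.succ

lemma lintegral_pi_vecCons {n : ℕ} (ν : Measure ℝ) [SigmaFinite ν] {F : (Fin (n + 1) → ℝ) → ℝ≥0∞}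
    (hF : Measurable F) :
    ∫⁻ x, F x ∂Measure.pi (fun _ => ν) =
      ∫⁻ y, ∫⁻ t, F (vecCons t y) ∂ν ∂Measure.pi (fun _ : Fin n => ν) := by
  have hcons := (measurePreserving_piFinSuccAbove (fun _ : Fin (n + 1) => ν) 0).symm
  rw [hcons.lintegral_map_equiv F, lintegral_prod_symm]
  · exact lintegral_congr fun y => lintegral_congr fun t => congrArg F (Fin.insertNth_zero' t y)
  · exact (hF.comp (MeasurableEquiv.measurable _)).aemeasurable

lemma lintegral_vecCons {n : ℕ} {F : (Fin (n + 1) → ℝ) → ℝ≥0∞} (hF : Measurable F) :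
    ∫⁻ x, F x = ∫⁻ y : Fin n → ℝ, ∫⁻ t, F (vecCons t y) := by
  simpa only [volume_pi] using lintegral_pi_vecCons volume hF

lemma measurable_gaussianTransport_withDensity {α : Type*} [MeasurableSpace α]
    {f : α → ℝ → ℝ≥0∞} (hf : Measurable fun p : α × ℝ => f p.1 p.2) {x : α → ℝ}
    (hx : Measurable x) :
    Measurable fun a => gaussianTransport (volume.withDensity (f a)) (x a) := by
  have hIic : Measurable fun a => ∫⁻ t in Iic (x a), f a t := by
    simp_rw [← lintegral_indicator measurableSet_Iic]
    exact Measurable.lintegral_prod_right'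
      (f := {p : α × ℝ | p.2 ≤ x p.1}.indicator fun p => f p.1 p.2)
      (hf.indicator (measurableSet_le measurable_snd (hx.comp measurable_fst)))
  refine measurable_gaussianQuantile.comp (Measurable.div ?_ ?_)
  · simp only [measureReal_def, withDensity_apply _ measurableSet_Iic]
    exact hIic.ennreal_toReal
  · simp only [measureReal_def, withDensity_apply _ MeasurableSet.univ, Measure.restrict_univ]
    exact hf.lintegral_prod_right'.ennreal_toReal

lemma lintegral_mul_comp_gaussianTransport {f : ℝ → ℝ≥0∞} (hf : Measurable f)
    (hfi : ∫⁻ t, f t ≠ ∞) {φ : ℝ → ℝ≥0∞} (hφ : Measurable φ) :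
    ∫⁻ t, f t * φ (gaussianTransport (volume.withDensity f) t) =
      (∫⁻ t, f t) * ∫⁻ s, φ s ∂gaussianReal 0 1 := by
  have := isFiniteMeasure_withDensity hfi
  have hT := measurable_gaussianTransport (volume.withDensity f)
  have hφT := lintegral_withDensity_eq_lintegral_mul volume hf (hφ.comp hT)
  simp only [Pi.mul_apply, Function.comp_apply] at hφT
  rw [← hφT, ← lintegral_map hφ hT, map_gaussianTransport, lintegral_smul_measure,
    withDensity_apply f .univ, Measure.restrict_univ, smul_eq_mul]

/-- The density on the last `n` coordinates obtained by integrating out the first one. -/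
noncomputable def tailMarginal {n : ℕ} (f : (Fin (n + 1) → ℝ) → ℝ≥0∞) (y : Fin n → ℝ) : ℝ≥0∞ :=
  ∫⁻ t, f (vecCons t y)

/-- The Knothe–Rosenblatt map of the density `f` on `ℝⁿ`: the triangular map whose `i`-th
coordinate transports, with the coordinates after `i` fixed, the conditional law of the `i`-th
coordinate under `f` to the standard Gaussian measure. -/
noncomputable def knotheMap : {n : ℕ} → ((Fin n → ℝ) → ℝ≥0∞) → (Fin n → ℝ) → Fin n → ℝ
  | 0, _ => id
  | _ + 1, f => fun x =>
    vecCons (gaussianTransport (volume.withDensity fun t => f (vecCons t (vecTail x))) (vecHead x))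
      (knotheMap (tailMarginal f) (vecTail x))

variable {n : ℕ}

lemma knotheMap_vecCons (f : (Fin (n + 1) → ℝ) → ℝ≥0∞) (t : ℝ) (y : Fin n → ℝ) :
    knotheMap f (vecCons t y) =
      vecCons (gaussianTransport (volume.withDensity fun s => f (vecCons s y)) t)
        (knotheMap (tailMarginal f) y) :=
  rfl

@[fun_prop]
lemma measurable_tailMarginal {f : (Fin (n + 1) → ℝ) → ℝ≥0∞} (hf : Measurable f) :
    Measurable (tailMarginal f) :=
  Measurable.lintegral_prod_right' (f := fun p : (Fin n → ℝ) × ℝ => f (vecCons p.2 p.1))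
    (by fun_prop)

lemma lintegral_tailMarginal {f : (Fin (n + 1) → ℝ) → ℝ≥0∞} (hf : Measurable f) :
    ∫⁻ y, tailMarginal f y = ∫⁻ x, f x :=
  (lintegral_vecCons hf).symm

lemma measurable_section_vecCons {f : (Fin (n + 1) → ℝ) → ℝ≥0∞} (hf : Measurable f)
    (y : Fin n → ℝ) : Measurable fun t => f (vecCons t y) := by
  fun_prop

@[fun_prop]
lemma measurable_knotheMap {f : (Fin n → ℝ) → ℝ≥0∞} (hf : Measurable f) :
    Measurable (knotheMap f) := by
  induction n with
  | zero => exact measurable_id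
  | succ n ih =>
    exact measurable_vecCons (measurable_gaussianTransport_withDensity (by fun_prop)
      (measurable_pi_apply 0)) ((ih (measurable_tailMarginal hf)).comp measurable_vecTail)

lemma lintegral_mul_comp_knotheMap {f : (Fin n → ℝ) → ℝ≥0∞} (hf : Measurable f)
    (hfi : ∫⁻ x, f x ≠ ∞) {φ : (Fin n → ℝ) → ℝ≥0∞} (hφ : Measurable φ) :
    ∫⁻ x, f x * φ (knotheMap f x) =
      (∫⁻ x, f x) * ∫⁻ x, φ x ∂Measure.pi fun _ => gaussianReal 0 1 := by
  induction n with
  | zero => simp [volume_pi, knotheMap, lintegral_unique]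
  | succ n ih =>
    have hm := measurable_tailMarginal hf
    have hmi : ∫⁻ y, tailMarginal f y ≠ ∞ := by rwa [lintegral_tailMarginal hf]
    have hψ : Measurable fun y : Fin n → ℝ => ∫⁻ s, φ (vecCons s y) ∂gaussianReal 0 1 :=
      Measurable.lintegral_prod_right' (f := fun p : (Fin n → ℝ) × ℝ => φ (vecCons p.2 p.1))
        (by fun_prop)
    calc ∫⁻ x, f x * φ (knotheMap f x)
        = ∫⁻ y, ∫⁻ t, f (vecCons t y) * φ (knotheMap f (vecCons t y)) :=
          lintegral_vecCons (hf.mul (hφ.comp (measurable_knotheMap hf)))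
      _ = ∫⁻ y, tailMarginal f y *
            ∫⁻ s, φ (vecCons s (knotheMap (tailMarginal f) y)) ∂gaussianReal 0 1 := by
          refine lintegral_congr_ae ?_
          filter_upwards [ae_lt_top hm hmi] with y hy
          simp only [knotheMap_vecCons]
          exact lintegral_mul_comp_gaussianTransport (measurable_section_vecCons hf y) hy.ne
            (measurable_section_vecCons hφ _)
      _ = (∫⁻ x, f x) * ∫⁻ x, φ x ∂Measure.pi fun _ => gaussianReal 0 1 := by
          rw [ih hm hmi hψ, lintegral_tailMarginal hf, lintegral_pi_vecCons _ hφ]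

variable {p q : ℝ}

lemma lintegral_section_rpow_mul_exp_dotProduct_knotheMap_le (hp : 0 < p) (hq : 0 < q)
    (hpq : p + q = 1) {f g : (Fin (n + 1) → ℝ) → ℝ≥0∞} (hf : Measurable f) (hg : Measurable g)
    (z : Fin (n + 1) → ℝ) {y : Fin n → ℝ} (hfy : tailMarginal f y < ∞)
    (hgy : tailMarginal g (vecTail z - y) < ∞) :
    ∫⁻ t, f (vecCons t y) ^ p * g (z - vecCons t y) ^ q * ENNReal.ofReal (Real.exp (√p * √q *
        (knotheMap f (vecCons t y) ⬝ᵥ knotheMap g (z - vecCons t y)))) ≤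
      ENNReal.ofReal (√p ^ p * √q ^ q) *
        (tailMarginal f y ^ p * tailMarginal g (vecTail z - y) ^ q *
          ENNReal.ofReal (Real.exp (√p * √q * (knotheMap (tailMarginal f) y ⬝ᵥ
            knotheMap (tailMarginal g) (vecTail z - y))))) := by
  set w := vecTail z
  calc _ = ∫⁻ t, f (vecCons t y) ^ p * g (vecCons (vecHead z - t) (w - y)) ^ q *
        ENNReal.ofReal (Real.exp (√p * √q *
          (gaussianTransport (volume.withDensity fun t => f (vecCons t y)) t *
            gaussianTransport (volume.withDensity fun t => g (vecCons t (w - y)))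
              (vecHead z - t)))) *
        ENNReal.ofReal (Real.exp (√p * √q *
          (knotheMap (tailMarginal f) y ⬝ᵥ knotheMap (tailMarginal g) (w - y)))) := by
        refine lintegral_congr fun t => ?_
        rw [sub_cons, knotheMap_vecCons, knotheMap_vecCons, cons_dotProduct_cons, mul_add,
          Real.exp_add, ENNReal.ofReal_mul (Real.exp_pos _).le, ← mul_assoc]
    _ ≤ ENNReal.ofReal (√p ^ p * √q ^ q) *
          (tailMarginal f y ^ p * tailMarginal g (w - y) ^ q) * _ := by
        rw [lintegral_mul_const' _ _ ENNReal.ofReal_ne_top]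
        gcongr
        exact lintegral_rpow_mul_exp_gaussianTransport_le hp hq hpq
          (measurable_section_vecCons hf y) (measurable_section_vecCons hg (w - y))
          hfy.ne hgy.ne (vecHead z)
    _ = _ := mul_assoc _ _ _

lemma lintegral_rpow_mul_exp_dotProduct_knotheMap_le (hp : 0 < p) (hq : 0 < q) (hpq : p + q = 1)
    {f g : (Fin n → ℝ) → ℝ≥0∞} (hf : Measurable f) (hg : Measurable g)
    (hfi : ∫⁻ x, f x ≠ ∞) (hgi : ∫⁻ x, g x ≠ ∞) (z : Fin n → ℝ) :
    ∫⁻ x, f x ^ p * g (z - x) ^ q *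
        ENNReal.ofReal (Real.exp (√p * √q * (knotheMap f x ⬝ᵥ knotheMap g (z - x)))) ≤
      ENNReal.ofReal (√p ^ p * √q ^ q) ^ n * ((∫⁻ x, f x) ^ p * (∫⁻ x, g x) ^ q) := by
  induction n with
  | zero => simp [volume_pi, lintegral_unique, Subsingleton.elim default ![]]
  | succ n ih =>
    have hfm := measurable_tailMarginal hf
    have hgm := measurable_tailMarginal hg
    have hfmi : ∫⁻ y, tailMarginal f y ≠ ∞ := by rwa [lintegral_tailMarginal hf]
    have hgmi : ∫⁻ y, tailMarginal g y ≠ ∞ := by rwa [lintegral_tailMarginal hg]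
    set K := ENNReal.ofReal (√p ^ p * √q ^ q)
    set w := vecTail z
    set e : (Fin n → ℝ) → ℝ≥0∞ := fun y => ENNReal.ofReal (Real.exp (√p * √q *
      (knotheMap (tailMarginal f) y ⬝ᵥ knotheMap (tailMarginal g) (w - y))))
    have hrefl := (Measure.measurePreserving_sub_left volume w).quasiMeasurePreserving
    rw [lintegral_vecCons]
    · calc _ ≤ ∫⁻ y, K * (tailMarginal f y ^ p * tailMarginal g (w - y) ^ q * e y) := by
            refine lintegral_mono_ae ?_
            filter_upwards [ae_lt_top hfm hfmi, hrefl.ae (ae_lt_top hgm hgmi)] with y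
            exact lintegral_section_rpow_mul_exp_dotProduct_knotheMap_le hp hq hpq hf hg z
        _ = K * ∫⁻ y, tailMarginal f y ^ p * tailMarginal g (w - y) ^ q * e y :=
            lintegral_const_mul' _ _ ENNReal.ofReal_ne_top
        _ ≤ K * (K ^ n * ((∫⁻ x, f x) ^ p * (∫⁻ x, g x) ^ q)) := by
            rw [← lintegral_tailMarginal hf, ← lintegral_tailMarginal hg]
            gcongr
            exact ih hfm hgm hfmi hgmi w
        _ = _ := by rw [pow_succ', mul_assoc]
    · simp only [dotProduct]
      fun_prop (disch := assumption)

end KnotheMap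

lemma two_le_min_exp_add_min_exp_neg (a : ℝ) :
    2 ≤ min (ENNReal.ofReal (Real.exp a)) 2 + min (ENNReal.ofReal (Real.exp (-a))) 2 := by
  have hcosh : (2 : ℝ≥0∞) ≤ ENNReal.ofReal (Real.exp a) + ENNReal.ofReal (Real.exp (-a)) := by
    rw [← ENNReal.ofReal_add (Real.exp_nonneg _) (Real.exp_nonneg _), ← ENNReal.ofReal_ofNat]
    exact ENNReal.ofReal_le_ofReal (by linarith [Real.one_le_cosh a, Real.cosh_eq a])
  rcases le_total (ENNReal.ofReal (Real.exp a)) 2 with ha | ha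
  · rcases le_total (ENNReal.ofReal (Real.exp (-a))) 2 with ha' | ha'
    · rwa [min_eq_left ha, min_eq_left ha']
    · exact (min_eq_right ha').ge.trans le_add_self
  · exact (min_eq_right ha).ge.trans le_self_add

lemma measure_univ_le_lintegral_min_exp {α : Type*} [MeasurableSpace α] [InvolutiveNeg α]
    [MeasurableNeg α] (γ : Measure α) [γ.IsNegInvariant] {ℓ : α → ℝ} (hℓ : Measurable ℓ)
    (hodd : ∀ x, ℓ (-x) = -ℓ x) :
    γ univ ≤ ∫⁻ x, min (ENNReal.ofReal (Real.exp (ℓ x))) 2 ∂γ := by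
  have hm : Measurable fun x => min (ENNReal.ofReal (Real.exp (ℓ x))) 2 := by fun_prop
  refine (ENNReal.mul_le_mul_iff_right two_ne_zero ENNReal.ofNat_ne_top).1 ?_
  calc 2 * γ univ = ∫⁻ _, 2 ∂γ := (lintegral_const 2).symm
    _ ≤ ∫⁻ x, (min (ENNReal.ofReal (Real.exp (ℓ x))) 2 +
          min (ENNReal.ofReal (Real.exp (ℓ (-x)))) 2) ∂γ :=
        lintegral_mono fun x => by simpa only [hodd] using two_le_min_exp_add_min_exp_neg (ℓ x)
    _ = 2 * ∫⁻ x, min (ENNReal.ofReal (Real.exp (ℓ x))) 2 ∂γ := by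
        rw [lintegral_add_left hm,
          lintegral_neg_eq_self fun x => min (ENNReal.ofReal (Real.exp (ℓ x))) 2, two_mul]

lemma setLIntegral_prod_le_of_mapsTo_add {G : Type*} [AddCommGroup G] [MeasurableSpace G]
    [MeasurableAdd₂ G] [MeasurableNeg G] {μ : Measure G} [SFinite μ] [μ.IsAddLeftInvariant]
    {Θ : Set (G × G)} {S : Set G} (hS : MeasurableSet S)
    (hΘS : MapsTo (fun x => x.1 + x.2) Θ S) {k : G × G → ℝ≥0∞} (hk : Measurable k) {K : ℝ≥0∞}
    (hK : ∀ z, ∫⁻ x, k (x, z - x) ∂μ ≤ K) :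
    ∫⁻ x in Θ, k x ∂μ.prod μ ≤ K * μ S := by
  have hS' : MeasurableSet {x : G × G | x.1 + x.2 ∈ S} := measurable_add hS
  calc ∫⁻ x in Θ, k x ∂μ.prod μ
      ≤ ∫⁻ x in {x : G × G | x.1 + x.2 ∈ S}, k x ∂μ.prod μ := lintegral_mono_set hΘS
    _ = ∫⁻ x, ∫⁻ y, S.indicator (fun _ => k (x, y)) (x + y) ∂μ ∂μ := by
        rw [← lintegral_indicator hS', lintegral_prod _ (hk.indicator hS').aemeasurable]
        rfl
    _ = ∫⁻ x, ∫⁻ z, S.indicator (fun _ => k (x, z - x)) z ∂μ ∂μ := by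
        refine lintegral_congr fun x => ?_
        have h := lintegral_add_left_eq_self (μ := μ)
          (fun z => S.indicator (fun _ => k (x, z - x)) z) x
        simpa only [indicator_apply, add_sub_cancel_left] using h
    _ = ∫⁻ z, ∫⁻ x, S.indicator (fun _ => k (x, z - x)) z ∂μ ∂μ := by
        refine lintegral_lintegral_swap (Measurable.aemeasurable ?_)
        exact (hk.comp (measurable_fst.prodMk (measurable_snd.sub measurable_fst))).indicator
          (measurable_snd hS)
    _ = ∫⁻ z in S, ∫⁻ x, k (x, z - x) ∂μ ∂μ := by
        rw [← lintegral_indicator hS]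
        refine lintegral_congr fun z => ?_
        by_cases hz : z ∈ S <;> simp [hz]
    _ ≤ K * μ S := by
        rw [← setLIntegral_const]
        exact lintegral_mono fun z => hK z

lemma one_sub_two_mul_mul_measure_le_setLIntegral {α : Type*} [MeasurableSpace α] {μ : Measure α}
    {E Θ : Set α} (hΘ : MeasurableSet Θ) (hΘE : Θ ⊆ E) (hE : μ E ≠ ∞) {δ : ℝ} (hδ : 0 ≤ δ)
    (hμ : ENNReal.ofReal (1 - δ) * μ E ≤ μ Θ) {e : α → ℝ≥0∞}
    (he : μ E ≤ ∫⁻ x in E, min (e x) 2 ∂μ) :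
    ENNReal.ofReal (1 - 2 * δ) * μ E ≤ ∫⁻ x in Θ, e x ∂μ := by
  have hsdiff : μ (E \ Θ) ≤ ENNReal.ofReal δ * μ E := by
    rw [measure_sdiff hΘE hΘ.nullMeasurableSet (ne_top_of_le_ne_top hE (measure_mono hΘE)),
      tsub_le_iff_right]
    calc μ E = ENNReal.ofReal (δ + (1 - δ)) * μ E := by simp
      _ ≤ ENNReal.ofReal δ * μ E + ENNReal.ofReal (1 - δ) * μ E := by
        rw [← add_mul]
        gcongr
        exact ENNReal.ofReal_add_le
      _ ≤ ENNReal.ofReal δ * μ E + μ Θ := by gcongr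
  have hsplit : μ E ≤ ∫⁻ x in Θ, e x ∂μ + ENNReal.ofReal (2 * δ) * μ E := calc
    μ E ≤ ∫⁻ x in Θ, min (e x) 2 ∂μ + ∫⁻ x in E \ Θ, min (e x) 2 ∂μ := by
        rwa [← inter_eq_self_of_subset_right hΘE, sdiff_self_inter,
          lintegral_inter_add_sdiff _ E hΘ]
    _ ≤ ∫⁻ x in Θ, e x ∂μ + ∫⁻ _ in E \ Θ, 2 ∂μ :=
        add_le_add (lintegral_mono fun _ => min_le_left _ _)
          (lintegral_mono fun _ => min_le_right _ _)
    _ ≤ ∫⁻ x in Θ, e x ∂μ + ENNReal.ofReal (2 * δ) * μ E := by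
        rw [setLIntegral_const, ENNReal.ofReal_mul zero_le_two, ENNReal.ofReal_ofNat, mul_assoc]
        gcongr
  rw [ENNReal.ofReal_sub _ (by positivity), ENNReal.ofReal_one, ENNReal.sub_mul fun _ _ => hE,
    one_mul]
  exact tsub_le_iff_right.2 hsplit

section RestrictedSum

variable {n : ℕ} {A B : Set (Fin n → ℝ)}

lemma measure_le_setLIntegral_min_exp_comp_knotheMap (hA : MeasurableSet A)
    (hA_top : volume A ≠ ∞) {ℓ : (Fin n → ℝ) → ℝ} (hℓ : Measurable ℓ)
    (hodd : ∀ x, ℓ (-x) = -ℓ x) :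
    volume A ≤ ∫⁻ x in A, min (ENNReal.ofReal (Real.exp (ℓ (knotheMap (A.indicator 1) x)))) 2 := by
  have hf : ∫⁻ x, A.indicator 1 x = volume A := lintegral_indicator_one hA
  set γ := Measure.pi fun _ : Fin n => gaussianReal 0 1
  calc volume A = volume A * γ univ := by rw [measure_univ, mul_one]
    _ ≤ volume A * ∫⁻ x, min (ENNReal.ofReal (Real.exp (ℓ x))) 2 ∂γ := by
        gcongr
        exact measure_univ_le_lintegral_min_exp γ hℓ hodd
    _ = ∫⁻ x, A.indicator 1 x *
          min (ENNReal.ofReal (Real.exp (ℓ (knotheMap (A.indicator 1) x)))) 2 := by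
        rw [← hf]
        exact (lintegral_mul_comp_knotheMap (measurable_one.indicator hA) (by rwa [hf])
          (φ := fun x => min (ENNReal.ofReal (Real.exp (ℓ x))) 2) (by fun_prop)).symm
    _ = _ := by
        rw [← lintegral_indicator hA]
        exact lintegral_congr fun x => by by_cases hx : x ∈ A <;> simp [hx]

/-- The kernel `exp (√p √q ⟨T_A x, T_B y⟩)` at `(x, y)`, where `T_A` and `T_B` are the Knothe maps
of the uniform densities on `A` and `B`. -/
noncomputable def knotheTwist (p q : ℝ) (A B : Set (Fin n → ℝ)) (x : (Fin n → ℝ) × (Fin n → ℝ)) :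
    ℝ≥0∞ :=
  ENNReal.ofReal (Real.exp (√p * √q *
    (knotheMap (A.indicator 1) x.1 ⬝ᵥ knotheMap (B.indicator 1) x.2)))

lemma measurable_knotheTwist (p q : ℝ) (hA : MeasurableSet A) (hB : MeasurableSet B) :
    Measurable (knotheTwist p q A B) := by
  unfold knotheTwist
  simp only [dotProduct]
  fun_prop

lemma volume_prod_le_setLIntegral_min_knotheTwist (p q : ℝ) (hA : MeasurableSet A)
    (hB : MeasurableSet B) (hA_top : volume A ≠ ∞) :
    volume (A ×ˢ B) ≤ ∫⁻ x in A ×ˢ B, min (knotheTwist p q A B x) 2 := by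
  have hm := (measurable_knotheTwist p q hA hB).min (measurable_const (a := 2))
  calc volume (A ×ˢ B) = ∫⁻ _ in B, volume A := by
        rw [setLIntegral_const, Measure.volume_eq_prod, Measure.prod_prod]
    _ ≤ ∫⁻ y in B, ∫⁻ x in A, min (knotheTwist p q A B (x, y)) 2 :=
        lintegral_mono fun y => measure_le_setLIntegral_min_exp_comp_knotheMap hA hA_top
          (ℓ := fun u => √p * √q * (u ⬝ᵥ knotheMap (B.indicator 1) y))
          (by simp only [dotProduct]; fun_prop) (fun u => by rw [neg_dotProduct, mul_neg])
    _ = ∫⁻ x in A ×ˢ B, min (knotheTwist p q A B x) 2 := by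
        rw [Measure.volume_eq_prod, ← Measure.prod_restrict,
          lintegral_prod_symm _ hm.aemeasurable]

variable {S : Set (Fin n → ℝ)} {Θ : Set ((Fin n → ℝ) × (Fin n → ℝ))} {p q : ℝ}

lemma setLIntegral_knotheTwist_le (hp : 0 < p) (hq : 0 < q) (hpq : p + q = 1)
    (hA : MeasurableSet A) (hB : MeasurableSet B) (hA_top : volume A ≠ ∞) (hB_top : volume B ≠ ∞)
    (hS : MeasurableSet S) (hΘ : MeasurableSet Θ) (hΘAB : Θ ⊆ A ×ˢ B)
    (hΘS : MapsTo (fun x => x.1 + x.2) Θ S) :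
    ∫⁻ x in Θ, knotheTwist p q A B x ≤
      ENNReal.ofReal (√p ^ p * √q ^ q) ^ n * (volume A ^ p * volume B ^ q) * volume S := by
  have hf : Measurable (A.indicator (1 : (Fin n → ℝ) → ℝ≥0∞)) := measurable_one.indicator hA
  have hg : Measurable (B.indicator (1 : (Fin n → ℝ) → ℝ≥0∞)) := measurable_one.indicator hB
  have hfA : ∫⁻ x, A.indicator 1 x = volume A := lintegral_indicator_one hA
  have hgB : ∫⁻ x, B.indicator 1 x = volume B := lintegral_indicator_one hB
  have he := measurable_knotheTwist p q hA hB
  calc ∫⁻ x in Θ, knotheTwist p q A B x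
      ≤ ∫⁻ x in Θ, A.indicator 1 x.1 ^ p * B.indicator 1 x.2 ^ q * knotheTwist p q A B x :=
        setLIntegral_mono' hΘ fun x hx => by simp [(hΘAB hx).1, (hΘAB hx).2]
    _ ≤ _ := by
        refine setLIntegral_prod_le_of_mapsTo_add hS hΘS (by fun_prop) fun z => ?_
        rw [← hfA, ← hgB]
        exact lintegral_rpow_mul_exp_dotProduct_knotheMap_le hp hq hpq hf hg (by rwa [hfA])
          (by rwa [hgB]) z

lemma one_sub_two_mul_mul_volume_mul_volume_le (hp : 0 < p) (hq : 0 < q) (hpq : p + q = 1)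
    (hA : MeasurableSet A) (hB : MeasurableSet B) (hA_top : volume A ≠ ∞) (hB_top : volume B ≠ ∞)
    (hS : MeasurableSet S) (hΘ : MeasurableSet Θ) (hΘAB : Θ ⊆ A ×ˢ B)
    (hΘS : MapsTo (fun x => x.1 + x.2) Θ S) {δ : ℝ} (hδ : 0 ≤ δ)
    (hvol : ENNReal.ofReal (1 - δ) * (volume A * volume B) ≤ volume Θ) :
    ENNReal.ofReal (1 - 2 * δ) * (volume A * volume B) ≤
      ENNReal.ofReal (√p ^ p * √q ^ q) ^ n * (volume A ^ p * volume B ^ q) * volume S := by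
  have hAB : volume (A ×ˢ B) = volume A * volume B := by
    rw [Measure.volume_eq_prod, Measure.prod_prod]
  rw [← hAB] at hvol ⊢
  exact (one_sub_two_mul_mul_measure_le_setLIntegral hΘ hΘAB
      (hAB ▸ ENNReal.mul_ne_top hA_top hB_top) hδ hvol
      (volume_prod_le_setLIntegral_min_knotheTwist p q hA hB hA_top)).trans
    (setLIntegral_knotheTwist_le hp hq hpq hA hB hA_top hB_top hS hΘ hΘAB hΘS)

end RestrictedSum

lemma exp_neg_two_mul_le_one_sub {x : ℝ} (hx : 0 ≤ x) (hx' : x ≤ 1 / 2) :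
    Real.exp (-(2 * x)) ≤ 1 - x := by
  have h := Real.add_one_le_exp (2 * x)
  rw [Real.exp_neg, inv_le_iff_one_le_mul₀ (Real.exp_pos _)]
  nlinarith

lemma one_sub_mul_le_one_sub_rpow {x r : ℝ} (hx : 0 ≤ x) (hx' : x ≤ 1 / 2) (hr : 0 ≤ r) :
    1 - 2 * x * r ≤ (1 - x) ^ r := calc
  1 - 2 * x * r = -(2 * x) * r + 1 := by ring
  _ ≤ Real.exp (-(2 * x) * r) := Real.add_one_le_exp _
  _ = Real.exp (-(2 * x)) ^ r := Real.exp_mul _ _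
  _ ≤ (1 - x) ^ r := by
    gcongr
    exact exp_neg_two_mul_le_one_sub hx hx'

lemma rpow_mul_rpow_mul_add_eq_mul {a b p q : ℝ} (ha : 0 < a) (hb : 0 < b)
    (hp : p = b / (a + b)) (hq : q = a / (a + b)) :
    p ^ p * q ^ q * (a ^ p * b ^ q) * (a + b) = a * b := by
  have hp0 : 0 < p := hp ▸ by positivity
  have hq0 : 0 < q := hq ▸ by positivity
  have hpa : p * a = a * b / (a + b) := by rw [hp]; ring
  have hqb : q * b = a * b / (a + b) := by rw [hq]; ring
  have hpq : p + q = 1 := by rw [hp, hq]; field_simp; ring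
  calc p ^ p * q ^ q * (a ^ p * b ^ q) * (a + b) = (p * a) ^ p * (q * b) ^ q * (a + b) := by
        rw [Real.mul_rpow hp0.le ha.le, Real.mul_rpow hq0.le hb.le]
        ring
    _ = a * b / (a + b) * (a + b) := by
        rw [hpa, hqb, ← Real.rpow_add (by positivity), hpq, Real.rpow_one]
    _ = a * b := div_mul_cancel₀ _ (by positivity)

lemma sqrt_rpow_mul_sqrt_rpow_pow {p q : ℝ} (hp : 0 ≤ p) (hq : 0 ≤ q) (n : ℕ) :
    (√p ^ p * √q ^ q) ^ n = (p ^ p * q ^ q) ^ ((n : ℝ) / 2) := by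
  rw [Real.sqrt_eq_rpow, Real.sqrt_eq_rpow, ← Real.rpow_mul hp, ← Real.rpow_mul hq,
    mul_comm (1 / 2) p, mul_comm (1 / 2) q, Real.rpow_mul hp, Real.rpow_mul hq,
    ← Real.mul_rpow (by positivity) (by positivity), ← Real.rpow_mul_natCast (by positivity)]
  congr 1
  ring

lemma rpow_mul_rpow_mul_add_rpow_eq {a b p q : ℝ} (ha : 0 < a) (hb : 0 < b)
    (hp : p = b / (a + b)) (hq : q = a / (a + b)) {r : ℝ} :
    (p ^ p * q ^ q) ^ r * ((a ^ r) ^ p * (b ^ r) ^ q) * (a + b) ^ r = a ^ r * b ^ r := by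
  have hp0 : 0 < p := hp ▸ by positivity
  have hq0 : 0 < q := hq ▸ by positivity
  rw [← Real.rpow_mul ha.le, ← Real.rpow_mul hb.le, mul_comm r p, mul_comm r q,
    Real.rpow_mul ha.le, Real.rpow_mul hb.le, ← Real.mul_rpow (by positivity) (by positivity),
    ← Real.mul_rpow (by positivity) (by positivity),
    ← Real.mul_rpow (by positivity) (by positivity), rpow_mul_rpow_mul_add_eq_mul ha hb hp hq,
    Real.mul_rpow ha.le hb.le]

lemma rpow_mul_add_rpow_le_rpow {n : ℕ} (hn : 0 < n) {α β t V : ℝ} (hα : 0 < α) (hβ : 0 < β)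
    (ht : 0 ≤ t) (hV : ∀ p q : ℝ, 0 < p → 0 < q → p + q = 1 →
      t * (α * β) ≤ (√p ^ p * √q ^ q) ^ n * (α ^ p * β ^ q) * V) :
    t ^ ((2 : ℝ) / n) * (α ^ ((2 : ℝ) / n) + β ^ ((2 : ℝ) / n)) ≤ V ^ ((2 : ℝ) / n) := by
  have hr : (0 : ℝ) < n / 2 := by positivity
  obtain ⟨a, ha, rfl⟩ : ∃ a : ℝ, 0 < a ∧ a ^ ((n : ℝ) / 2) = α :=
    ⟨α ^ ((n : ℝ) / 2)⁻¹, by positivity, Real.rpow_inv_rpow hα.le hr.ne'⟩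
  obtain ⟨b, hb, rfl⟩ : ∃ b : ℝ, 0 < b ∧ b ^ ((n : ℝ) / 2) = β :=
    ⟨β ^ ((n : ℝ) / 2)⁻¹, by positivity, Real.rpow_inv_rpow hβ.le hr.ne'⟩
  -- These weights minimise `p ^ p * q ^ q * (a ^ p * b ^ q)`.
  obtain ⟨p, hp⟩ : ∃ p, p = b / (a + b) := ⟨_, rfl⟩
  obtain ⟨q, hq⟩ : ∃ q, q = a / (a + b) := ⟨_, rfl⟩
  have hp0 : 0 < p := hp ▸ by positivity
  have hq0 : 0 < q := hq ▸ by positivity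
  have hpq : p + q = 1 := by rw [hp, hq]; field_simp; ring
  have hVpq := hV p q hp0 hq0 hpq
  rw [sqrt_rpow_mul_sqrt_rpow_pow hp0.le hq0.le, ← rpow_mul_rpow_mul_add_rpow_eq ha hb hp hq,
    mul_left_comm] at hVpq
  have hVle : t * (a + b) ^ ((n : ℝ) / 2) ≤ V := le_of_mul_le_mul_left hVpq (by positivity)
  have hinv : (2 : ℝ) / n = ((n : ℝ) / 2)⁻¹ := (inv_div _ _).symm
  rw [hinv, Real.rpow_rpow_inv ha.le hr.ne', Real.rpow_rpow_inv hb.le hr.ne']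
  calc t ^ ((n : ℝ) / 2)⁻¹ * (a + b) = (t * (a + b) ^ ((n : ℝ) / 2)) ^ ((n : ℝ) / 2)⁻¹ := by
        rw [Real.mul_rpow ht (by positivity), Real.rpow_rpow_inv (by positivity) hr.ne']
    _ ≤ V ^ ((n : ℝ) / 2)⁻¹ := by gcongr

lemma one_sub_mul_volume_rpow_add_volume_rpow_le {n : ℕ} (hn : 0 < n) {A B S : Set (Fin n → ℝ)}
    (hA : MeasurableSet A) (hB : MeasurableSet B) (hS : MeasurableSet S)
    (hA_pos : volume A ≠ 0) (hB_pos : volume B ≠ 0) (hA_top : volume A ≠ ∞)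
    (hB_top : volume B ≠ ∞) {Θ : Set ((Fin n → ℝ) × (Fin n → ℝ))} (hΘ : MeasurableSet Θ)
    (hΘAB : Θ ⊆ A ×ˢ B) (hΘS : MapsTo (fun x => x.1 + x.2) Θ S) {δ : ℝ} (hδ : 0 ≤ δ)
    (hδ' : δ ≤ 1 / 4) (hvol : ENNReal.ofReal (1 - δ) * (volume A * volume B) ≤ volume Θ) :
    ENNReal.ofReal (1 - 8 * δ / n) * (volume A ^ ((2 : ℝ) / n) + volume B ^ ((2 : ℝ) / n)) ≤
      volume S ^ ((2 : ℝ) / n) := by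
  have hr : (0 : ℝ) < 2 / n := by positivity
  rcases eq_or_ne (volume S) ∞ with hS_top | hS_top
  · rw [hS_top, ENNReal.top_rpow_of_pos hr]
    exact le_top
  have hδ0 : 0 ≤ 1 - 2 * δ := by linarith
  have hδn : 1 - 8 * δ / n ≤ (1 - 2 * δ) ^ ((2 : ℝ) / n) :=
    (one_sub_mul_le_one_sub_rpow (by linarith) (by linarith) hr.le).trans' (le_of_eq (by ring))
  have hreal := rpow_mul_add_rpow_le_rpow hn (ENNReal.toReal_pos hA_pos hA_top)
    (ENNReal.toReal_pos hB_pos hB_top) hδ0 (V := (volume S).toReal) fun p q hp hq hpq => by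
      have hle := one_sub_two_mul_mul_volume_mul_volume_le hp hq hpq hA hB hA_top hB_top hS hΘ
        hΘAB hΘS hδ hvol
      have htop : ENNReal.ofReal (√p ^ p * √q ^ q) ^ n * (volume A ^ p * volume B ^ q) *
          volume S ≠ ∞ := by finiteness
      have hK : 0 ≤ √p ^ p * √q ^ q := by positivity
      simpa only [ENNReal.toReal_mul, ENNReal.toReal_pow, ENNReal.toReal_rpow,
        ENNReal.toReal_ofReal hδ0, ENNReal.toReal_ofReal hK] using ENNReal.toReal_mono htop hle
  have hA_fin : volume A ^ ((2 : ℝ) / n) ≠ ∞ := by finiteness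
  have hB_fin : volume B ^ ((2 : ℝ) / n) ≠ ∞ := by finiteness
  calc ENNReal.ofReal (1 - 8 * δ / n) * (volume A ^ ((2 : ℝ) / n) + volume B ^ ((2 : ℝ) / n))
      ≤ ENNReal.ofReal ((1 - 2 * δ) ^ ((2 : ℝ) / n)) *
          (volume A ^ ((2 : ℝ) / n) + volume B ^ ((2 : ℝ) / n)) := by gcongr
    _ ≤ volume S ^ ((2 : ℝ) / n) := by
        refine (ENNReal.toReal_le_toReal (by finiteness) (by finiteness)).1 ?_
        rwa [ENNReal.toReal_mul, ENNReal.toReal_ofReal (by positivity),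
          ENNReal.toReal_add hA_fin hB_fin, ← ENNReal.toReal_rpow, ← ENNReal.toReal_rpow,
          ← ENNReal.toReal_rpow]

/-- Corollary 1.5: if `λ(Θ) ≥ (1 - δ)λ(A)λ(B)` with `δ ∈ [0, c]`, then
`λ(A +_Θ B)^{2/n} ≥ (1 - Cδ/n)(λ(A)^{2/n} + λ(B)^{2/n})`. -/
theorem restricted_minkowski_sum_inequality_large_theta :
    ∃ c C : ℝ, 0 < c ∧ 0 < C ∧
      ∀ (δ : ℝ), δ ∈ Set.Icc (0 : ℝ) c →
      ∀ (n : ℕ), 0 < n →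
      ∀ (A B : Set (EuclideanSpace ℝ (Fin n))),
        MeasurableSet A → MeasurableSet B →
        0 < volume A → volume A < ⊤ → 0 < volume B → volume B < ⊤ →
      ∀ (Θ : Set (EuclideanSpace ℝ (Fin n) × EuclideanSpace ℝ (Fin n))),
        MeasurableSet Θ → Θ ⊆ A ×ˢ B →
        ENNReal.ofReal (1 - δ) * (volume A * volume B) ≤ volume Θ →
        ENNReal.ofReal (1 - C * δ / n) *
            (volume A ^ ((2 : ℝ) / n) + volume B ^ ((2 : ℝ) / n))
          ≤ volume (restrictedSum Θ) ^ ((2 : ℝ) / n) := by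
  refine ⟨1 / 4, 8, by norm_num, by norm_num, fun δ hδ n hn A B hA hB hA0 hA1 hB0 hB1 Θ hΘ hΘAB
    hvol => ?_⟩
  have hlp := PiLp.volume_preserving_toLp (Fin n)
  have hlp₂ := hlp.prod hlp
  have hS := measurableSet_toMeasurable volume (restrictedSum Θ)
  have hA' := hlp.measure_preimage hA.nullMeasurableSet
  have hB' := hlp.measure_preimage hB.nullMeasurableSet
  have hΘ' := hlp₂.measure_preimage hΘ.nullMeasurableSet
  rw [← measure_toMeasurable (restrictedSum Θ), ← hlp.measure_preimage hS.nullMeasurableSet,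
    ← hA', ← hB']
  rw [← Measure.volume_eq_prod, ← Measure.volume_eq_prod] at hΘ'
  rw [← hA', ← hB', ← hΘ'] at hvol
  rw [← hA'] at hA0 hA1
  rw [← hB'] at hB0 hB1
  exact one_sub_mul_volume_rpow_add_volume_rpow_le hn (hlp.measurable hA) (hlp.measurable hB)
    (hlp.measurable hS) hA0.ne' hB0.ne' hA1.ne hB1.ne (hlp₂.measurable hΘ) (preimage_mono hΘAB)
    (fun x hx => subset_toMeasurable _ _ ⟨_, hx, rfl⟩) hδ.1 hδ.2 hvol
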